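/- Let d ≥ 1 and 0 < α < 1. Let k : ℝ^d ∖ {0} → ℝ be smooth away from the origin, positively homogeneous of degree −d, with zero mean on spheres centered at the origin. Fix indices i, j and set K(z) = z_j ∂_i k(z), which is smooth away from the origin and homogeneous of degree −d but need not have zero spherical means. Let χ : [0,∞) → [0,1] be smooth, equal to 1 on [0,1], and compactly supported. Then there is a constant C depending only on k, χ, α, d such that for every σ ∈ C^α(ℝ^d), the function I(x) = ∫_{ℝ^d} χ(|x−y|) K(x−y) (σ(y) − σ(x)) dy (an absolutely convergent integral) satisfies ‖I‖_{C^α(ℝ^d)} ≤ C ‖σ‖_{C^α(ℝ^d)}. -/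

import Mathlib

open MeasureTheory Real Set Filter Topology

noncomputable section

/-- `ℝ^d` (with the sup norm). -/
abbrev Euc (d : ℕ) : Type := Fin d → ℝ

/-- `d × d` real matrices (with the sup norm). -/
abbrev Mat (d : ℕ) : Type := Fin d → Fin d → ℝ

/-- `f` belongs to `C^α(ℝ^d)` with (both components of the) norm bounded by `M`. -/
def InCa {d : ℕ} {F : Type*} [NormedAddCommGroup F] (α M : ℝ) (f : Euc d → F) : Prop :=
  (∀ x, ‖f x‖ ≤ M) ∧ ∀ x y, ‖f x - f y‖ ≤ M * ‖x - y‖ ^ α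

/-- `f` belongs to `C^{α,p} = C^α(ℝ^d) ∩ L^p(ℝ^d)` with norm bounded by `M`. -/
def InCap {d : ℕ} {F : Type*} [NormedAddCommGroup F] (α p M : ℝ) (f : Euc d → F) : Prop :=
  InCa α M f ∧ eLpNorm f (ENNReal.ofReal p) volume ≤ ENNReal.ofReal M

/-- `f` belongs to `C^{1+α}(ℝ^d)` with norm bounded by `M`. -/
def InC1a {d : ℕ} {F : Type*} [NormedAddCommGroup F] [NormedSpace ℝ F] (α M : ℝ)
    (f : Euc d → F) : Prop :=
  Differentiable ℝ f ∧ (∀ x, ‖f x‖ ≤ M) ∧ InCa α M (fderiv ℝ f)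

/-- `f` belongs to `C^{1+α,p} = C^{1+α}(ℝ^d) ∩ W^{1,p}(ℝ^d)` with norm bounded by `M`. -/
def InC1ap {d : ℕ} {F : Type*} [NormedAddCommGroup F] [NormedSpace ℝ F] (α p M : ℝ)
    (f : Euc d → F) : Prop :=
  Differentiable ℝ f ∧ (∀ x, ‖f x‖ ≤ M) ∧ InCap α p M (fderiv ℝ f) ∧
    eLpNorm f (ENNReal.ofReal p) volume ≤ ENNReal.ofReal M

/-- The heat kernel `g_t`. -/
def heatKer (d : ℕ) (t : ℝ) (x : Euc d) : ℝ :=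
  (4 * π * t) ^ (-(d : ℝ) / 2) * Real.exp (-(∑ i, x i ^ 2) / (4 * t))

/-- Convolution with the heat kernel. -/
def heatConv {d : ℕ} {F : Type*} [NormedAddCommGroup F] [NormedSpace ℝ F] [CompleteSpace F]
    (t : ℝ) (f : Euc d → F) (x : Euc d) : F :=
  ∫ y : Euc d, heatKer d t (x - y) • f y

/-- `𝕃(f)(t) = e^{tΔ} f` (with `e^{0Δ} = Id`). -/
def opL {d : ℕ} {F : Type*} [NormedAddCommGroup F] [NormedSpace ℝ F] [CompleteSpace F]
    (f : Euc d → F) (t : ℝ) : Euc d → F :=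
  if t = 0 then f else heatConv t f

/-- The kernel of `e^{tΔ}ℍ`, `ℍ = I + R ⊗ R` the Leray projector: the inverse Fourier
transform of the (real, even, integrable for `t > 0`) symbol
`(δ_{mn} - ξ_mξ_n/|ξ|²) e^{-4π²t|ξ|²}`. -/
def lerayHeatKer (d : ℕ) (t : ℝ) (x : Euc d) (m n : Fin d) : ℝ :=
  ∫ ξ : Euc d, ((if m = n then (1 : ℝ) else 0) - ξ m * ξ n / (∑ i, ξ i ^ 2)) *
    Real.exp (-(4 * π ^ 2) * t * (∑ i, ξ i ^ 2)) * Real.cos (2 * π * ∑ i, x i * ξ i)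

/-- `div σ` for a matrix-valued field, `(div σ)_n = ∑_j ∂_j σ_{jn}`. -/
def divMat {d : ℕ} (σ : Euc d → Mat d) (y : Euc d) (n : Fin d) : ℝ :=
  ∑ j, fderiv ℝ (fun z => σ z j n) y (Pi.single j 1)

/-- `div u` for a vector field. -/
def divVec {d : ℕ} (u : Euc d → Euc d) (x : Euc d) : ℝ :=
  ∑ j, fderiv ℝ u x (Pi.single j 1) j

/-- `(∇u)_{mn} = ∂_n u_m`, as a matrix. -/
def gradMat {d : ℕ} (u : Euc d → Euc d) (x : Euc d) : Mat d :=
  fun m n => fderiv ℝ u x (Pi.single n 1) m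

/-- `𝕌(σ)(t) = ∫₀ᵗ e^{(t-s)Δ} ℍ div σ(s) ds`. -/
def opU {d : ℕ} (σ : ℝ → Euc d → Mat d) (t : ℝ) (x : Euc d) : Euc d := fun m =>
  ∫ s in (0 : ℝ)..t, ∫ y : Euc d, ∑ n, lerayHeatKer d (t - s) (x - y) m n * divMat (σ s) y n

/-- `𝔾(σ)(t) = ∫₀ᵗ e^{(t-s)Δ} ∇ℍ div σ(s) ds`. -/
def opG {d : ℕ} (σ : ℝ → Euc d → Mat d) (t : ℝ) (x : Euc d) : Mat d := fun m j =>
  ∫ s in (0 : ℝ)..t, ∫ y : Euc d, ∑ n,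
    fderiv ℝ (fun z => lerayHeatKer d (t - s) z m n) (x - y) (Pi.single j 1) * divMat (σ s) y n

/-- Sup norm functional. -/
def supN {X : Type*} {F : Type*} [NormedAddCommGroup F] (f : X → F) : ℝ := ⨆ x, ‖f x‖

/-- Hölder seminorm functional. -/
def holN {d : ℕ} {F : Type*} [NormedAddCommGroup F] (α : ℝ) (f : Euc d → F) : ℝ :=
  ⨆ q : Euc d × Euc d, ‖f q.1 - f q.2‖ / ‖q.1 - q.2‖ ^ α

/-- The `C^{α,p}` norm functional. -/
def capN {d : ℕ} {F : Type*} [NormedAddCommGroup F] (α p : ℝ) (f : Euc d → F) : ℝ :=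
  supN f + holN α f + (eLpNorm f (ENNReal.ofReal p) volume).toReal

/-- The `C^{1+α,p}` norm functional. -/
def c1apN {d : ℕ} {F : Type*} [NormedAddCommGroup F] [NormedSpace ℝ F] (α p : ℝ)
    (f : Euc d → F) : ℝ :=
  supN f + capN α p (fderiv ℝ f) + (eLpNorm f (ENNReal.ofReal p) volume).toReal

/-- `L^∞(0,T;Y)` norm of a path, w.r.t. a norm functional `N` on `Y`. -/
def linfN {Y : Type*} (T : ℝ) (N : Y → ℝ) (f : ℝ → Y) : ℝ :=
  ⨆ t : Icc (0 : ℝ) T, N (f (t : ℝ))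

/-- `C^β(0,T;Y)` norm of a path, w.r.t. a norm functional `N` on `Y`. -/
def cbN {Y : Type*} [Sub Y] (T β : ℝ) (N : Y → ℝ) (f : ℝ → Y) : ℝ :=
  linfN T N f +
    ⨆ q : Icc (0 : ℝ) T × Icc (0 : ℝ) T,
      N (f (q.1 : ℝ) - f (q.2 : ℝ)) / |(q.1 : ℝ) - (q.2 : ℝ)| ^ β

/-- The (classical, principal value) convolution operator with kernel `k`. -/
def pvConv {d : ℕ} {F : Type*} [NormedAddCommGroup F] [NormedSpace ℝ F] [CompleteSpace F]
    (k : Euc d → ℝ) (f : Euc d → F) (x : Euc d) : F :=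
  limUnder (𝓝[>] (0 : ℝ)) fun ε => ∫ y in {y : Euc d | ε < ‖x - y‖}, k (x - y) • f y

/-- The (notional) spatial inverse of a flow map. -/
def invX {d : ℕ} (X : ℝ → Euc d → Euc d) (s : ℝ) : Euc d → Euc d := Function.invFun (X s)

/-- The Lagrangian nonlinearity `𝒰(X,τ) = 𝕃(u₀)∘X + 𝕌(τ∘X⁻¹)∘X`. -/
def calU {d : ℕ} (u₀ : Euc d → Euc d) (X : ℝ → Euc d → Euc d) (τ : ℝ → Euc d → Mat d)
    (t : ℝ) (a : Euc d) : Euc d :=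
  opL u₀ t (X t a) + opU (fun s y => τ s (invX X s y)) t (X t a)

/-- The Lagrangian velocity gradient `g = 𝕃(∇u₀)∘X + 𝔾(τ∘X⁻¹)∘X`. -/
def lagG {d : ℕ} (u₀ : Euc d → Euc d) (X : ℝ → Euc d → Euc d) (τ : ℝ → Euc d → Mat d)
    (t : ℝ) (a : Euc d) : Mat d :=
  opL (gradMat u₀) t (X t a) + opG (fun s y => τ s (invX X s y)) t (X t a)

/-- The Lagrangian nonlinearity `𝒯(X,τ) = F(g,τ)`. -/
def calT {d : ℕ} (F : Mat d → Mat d → Mat d) (u₀ : Euc d → Euc d) (X : ℝ → Euc d → Euc d)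
    (τ : ℝ → Euc d → Mat d) (t : ℝ) (a : Euc d) : Mat d :=
  F (lagG u₀ X τ t a) (τ t a)

/-- `v ⊗ v`. -/
def outer {d : ℕ} (w : Euc d) : Mat d := fun m n => w m * w n

/-- `𝕌(∇w)` for a time dependent matrix field `w`, assembled as a matrix. -/
def opUgrad {d : ℕ} (w : ℝ → Euc d → Mat d) (t : ℝ) (x : Euc d) : Mat d := fun m j =>
  opU (fun s y => fderiv ℝ (w s) y (Pi.single j 1)) t x m

/-- The Navier–Stokes Lagrangian nonlinearity
`𝒱(X,τ,v) = 𝕃(u₀)∘X + 𝕌(τ∘X⁻¹)∘X − 𝕌((v⊗v)∘X⁻¹)∘X`. -/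
def calV {d : ℕ} (u₀ : Euc d → Euc d) (X : ℝ → Euc d → Euc d) (τ : ℝ → Euc d → Mat d)
    (v : ℝ → Euc d → Euc d) (t : ℝ) (a : Euc d) : Euc d :=
  calU u₀ X τ t a - opU (fun s y => outer (v s (invX X s y))) t (X t a)

/-- The Navier–Stokes Lagrangian velocity gradient
`g = 𝕃(∇u₀)∘X + 𝔾(τ∘X⁻¹)∘X − 𝕌(∇((v⊗v)∘X⁻¹))∘X`. -/
def lagGns {d : ℕ} (u₀ : Euc d → Euc d) (X : ℝ → Euc d → Euc d) (τ : ℝ → Euc d → Mat d)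
    (v : ℝ → Euc d → Euc d) (t : ℝ) (a : Euc d) : Mat d :=
  lagG u₀ X τ t a - opUgrad (fun s y => outer (v s (invX X s y))) t (X t a)

/-- The Navier–Stokes Lagrangian nonlinearity `𝒯(X,τ,v) = F(g,τ)`. -/
def calTns {d : ℕ} (F : Mat d → Mat d → Mat d) (u₀ : Euc d → Euc d) (X : ℝ → Euc d → Euc d)
    (τ : ℝ → Euc d → Mat d) (v : ℝ → Euc d → Euc d) (t : ℝ) (a : Euc d) : Mat d :=
  F (lagGns u₀ X τ v t a) (τ t a)

/-- The space–time commutator `[η·∇, 𝔾](σ)`. -/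
def commG {d : ℕ} (η : ℝ → Euc d → Euc d) (σ : ℝ → Euc d → Mat d) (t : ℝ) (x : Euc d) :
    Mat d :=
  fderiv ℝ (opG σ t) x (η t x) - opG (fun s y => fderiv ℝ (σ s) y (η s y)) t x

/-- The space–time commutator `[η·∇, 𝕌](σ)`. -/
def commU {d : ℕ} (η : ℝ → Euc d → Euc d) (σ : ℝ → Euc d → Mat d) (t : ℝ) (x : Euc d) :
    Euc d :=
  fderiv ℝ (opU σ t) x (η t x) - opU (fun s y => fderiv ℝ (σ s) y (η s y)) t x

section SingularIntegral

variable {E : Type*} [NormedAddCommGroup E] [NormedSpace ℝ E] [FiniteDimensional ℝ E]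
  [MeasurableSpace E] [BorelSpace E] (μ : Measure E) [μ.IsAddHaarMeasure]

theorem setIntegral_norm_sub_left (f : E → ℝ) (x : E) (s : Set ℝ) :
    ∫ y in {y | ‖x - y‖ ∈ s}, f (x - y) ∂μ = ∫ z in {z | ‖z‖ ∈ s}, f z ∂μ :=
  (Measure.measurePreserving_sub_left μ x).setIntegral_preimage_emb
    (MeasurableEquiv.subLeft x).measurableEmbedding f {z | ‖z‖ ∈ s}

theorem integrableOn_norm_sub_left {f : E → ℝ} {s : Set ℝ}
    (h : IntegrableOn f {z | ‖z‖ ∈ s} μ) (x : E) :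
    IntegrableOn (fun y => f (x - y)) {y | ‖x - y‖ ∈ s} μ :=
  ((Measure.measurePreserving_sub_left μ x).integrableOn_comp_preimage
    (MeasurableEquiv.subLeft x).measurableEmbedding).2 h

variable [Nontrivial E]

theorem pow_mul_indicator_rpow_sub {n : ℕ} (hn : 0 < n) (β : ℝ) (s : Set ℝ) {y : ℝ}
    (hy : 0 < y) :
    y ^ (n - 1) • s.indicator (fun t : ℝ => t ^ (β - n)) y =
      s.indicator (fun t : ℝ => t ^ (β - 1)) y := by
  by_cases hys : y ∈ s
  · simp only [indicator_of_mem hys, smul_eq_mul]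
    rw [← rpow_natCast, ← rpow_add hy, Nat.cast_pred hn]
    ring_nf
  · simp [hys]

theorem integrableOn_norm_rpow_sub_finrank {β : ℝ} {s : Set ℝ} (hs : MeasurableSet s)
    (h : IntegrableOn (fun y : ℝ => y ^ (β - 1)) (Ioi 0 ∩ s)) :
    IntegrableOn (fun z : E => ‖z‖ ^ (β - Module.finrank ℝ E)) {z | ‖z‖ ∈ s} μ := by
  have hm : MeasurableSet {z : E | ‖z‖ ∈ s} := measurable_norm hs
  rw [← integrable_indicator_iff hm]
  refine (integrable_fun_norm_addHaar μ
    (f := s.indicator fun t : ℝ => t ^ (β - Module.finrank ℝ E))).2 ?_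
  refine IntegrableOn.congr_fun (f := s.indicator fun t : ℝ => t ^ (β - 1)) ?_
    (fun y hy => (pow_mul_indicator_rpow_sub Module.finrank_pos β s hy).symm) measurableSet_Ioi
  rw [IntegrableOn, integrable_indicator_iff hs, IntegrableOn, Measure.restrict_restrict hs,
    inter_comm]
  exact h

theorem setIntegral_norm_rpow_sub_finrank (β : ℝ) {s : Set ℝ} (hs : MeasurableSet s) :
    ∫ z in {z : E | ‖z‖ ∈ s}, ‖z‖ ^ (β - Module.finrank ℝ E) ∂μ =
      Module.finrank ℝ E * μ.real (Metric.ball 0 1) * ∫ y in Ioi 0 ∩ s, y ^ (β - 1) := by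
  have hm : MeasurableSet {z : E | ‖z‖ ∈ s} := measurable_norm hs
  rw [← integral_indicator hm]
  refine (integral_fun_norm_addHaar μ
    (s.indicator fun t : ℝ => t ^ (β - Module.finrank ℝ E))).trans ?_
  rw [setIntegral_congr_fun measurableSet_Ioi
    (fun y hy => pow_mul_indicator_rpow_sub Module.finrank_pos β s hy),
    setIntegral_indicator hs]
  simp [mul_assoc]

theorem integrableOn_norm_rpow_sub_finrank_Iic {α : ℝ} (hα : 0 < α) {r : ℝ} (hr : 0 ≤ r) :
    IntegrableOn (fun z : E => ‖z‖ ^ (α - Module.finrank ℝ E)) {z | ‖z‖ ∈ Iic r} μ := by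
  refine integrableOn_norm_rpow_sub_finrank μ measurableSet_Iic ?_
  rw [Ioi_inter_Iic, ← intervalIntegrable_iff_integrableOn_Ioc_of_le hr]
  exact intervalIntegral.intervalIntegrable_rpow' (by linarith)

theorem setIntegral_norm_rpow_sub_finrank_Iic {α : ℝ} (hα : 0 < α) {r : ℝ} (hr : 0 ≤ r) :
    ∫ z in {z : E | ‖z‖ ∈ Iic r}, ‖z‖ ^ (α - Module.finrank ℝ E) ∂μ =
      Module.finrank ℝ E * μ.real (Metric.ball 0 1) * (r ^ α / α) := by
  rw [setIntegral_norm_rpow_sub_finrank μ α measurableSet_Iic, Ioi_inter_Iic,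
    ← intervalIntegral.integral_of_le hr, integral_rpow (Or.inl (by linarith))]
  simp [zero_rpow hα.ne']

theorem integrableOn_norm_rpow_sub_finrank_Ioi {β : ℝ} (hβ : β < 0) {r : ℝ} (hr : 0 < r) :
    IntegrableOn (fun z : E => ‖z‖ ^ (β - Module.finrank ℝ E)) {z | ‖z‖ ∈ Ioi r} μ := by
  refine integrableOn_norm_rpow_sub_finrank μ measurableSet_Ioi ?_
  rw [Ioi_inter_Ioi, sup_eq_right.2 hr.le]
  exact integrableOn_Ioi_rpow_of_lt (by linarith) hr

theorem setIntegral_norm_rpow_sub_finrank_Ioi {β : ℝ} (hβ : β < 0) {r : ℝ} (hr : 0 < r) :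
    ∫ z in {z : E | ‖z‖ ∈ Ioi r}, ‖z‖ ^ (β - Module.finrank ℝ E) ∂μ =
      Module.finrank ℝ E * μ.real (Metric.ball 0 1) * (r ^ β / -β) := by
  rw [setIntegral_norm_rpow_sub_finrank μ β measurableSet_Ioi, Ioi_inter_Ioi,
    sup_eq_right.2 hr.le, integral_Ioi_rpow_of_lt (by linarith) hr]
  simp [neg_div, div_neg]

/-- Schauder estimate for a compactly supported singular kernel `L` of Calderón–Zygmund type
whose integrals over the exterior of all balls vanish. -/
theorem exists_holder_bound_singular_integral {α : ℝ} (hα0 : 0 < α) (hα1 : α < 1)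
    {L : E → ℝ} (hLm : Measurable L) {A B R : ℝ} (hA : 0 ≤ A) (hB : 0 ≤ B) (hR : 0 ≤ R)
    (hL : ∀ z, |L z| ≤ A * ‖z‖ ^ (-(Module.finrank ℝ E : ℝ)))
    (hsupp : ∀ z, R < ‖z‖ → L z = 0)
    (hLip : ∀ z w, 2 * ‖w - z‖ ≤ ‖z‖ →
      |L w - L z| ≤ B * ‖w - z‖ * ‖z‖ ^ (-(Module.finrank ℝ E : ℝ) - 1))
    (hmean : ∀ a > 0, ∫ z in {z | ‖z‖ ∈ Ioi a}, L z ∂μ = 0) :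
    ∃ C > (0 : ℝ), ∀ (σ : E → ℝ) (M : ℝ), Measurable σ → 0 ≤ M →
      (∀ x y, |σ x - σ y| ≤ M * ‖x - y‖ ^ α) →
      (∀ x, Integrable (fun y => L (x - y) * (σ y - σ x)) μ) ∧
      (∀ x, |∫ y, L (x - y) * (σ y - σ x) ∂μ| ≤ C * M) ∧
      ∀ x x', |(∫ y, L (x - y) * (σ y - σ x) ∂μ) - ∫ y, L (x' - y) * (σ y - σ x') ∂μ| ≤
        C * M * ‖x - x'‖ ^ α := by
  set n : ℝ := (Module.finrank ℝ E : ℝ) with hn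
  set c : ℝ := n * μ.real (Metric.ball 0 1) with hc
  have hc0 : 0 ≤ c := by positivity
  have hα1' : 0 < 1 - α := by linarith
  refine ⟨7 * A * c / α + 2 * B * c / (1 - α) + A * c * R ^ α / α + 1, by positivity, ?_⟩
  intro σ M hσm hM hσ
  have hmeas : ∀ x, Measurable fun y => L (x - y) * (σ y - σ x) := fun x => by fun_prop
  have hpt : ∀ x y, ‖L (x - y) * (σ y - σ x)‖ ≤ A * M * ‖x - y‖ ^ (α - n) := by
    intro x y
    rcases eq_or_ne x y with rfl | hxy
    · simpa using by positivity
    have hpos : 0 < ‖x - y‖ := norm_pos_iff.2 (sub_ne_zero.2 hxy)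
    rw [norm_mul, norm_eq_abs, norm_eq_abs]
    calc |L (x - y)| * |σ y - σ x|
        ≤ (A * ‖x - y‖ ^ (-n)) * (M * ‖x - y‖ ^ α) := by
          rw [abs_sub_comm (σ y)]
          exact mul_le_mul (hL _) (hσ x y) (abs_nonneg _) (by positivity)
      _ = A * M * ‖x - y‖ ^ (α - n) := by
          rw [sub_eq_neg_add α n, rpow_add hpos]; ring
  have hmaj : ∀ x r, 0 ≤ r →
      IntegrableOn (fun y => A * M * ‖x - y‖ ^ (α - n)) {y | ‖x - y‖ ∈ Iic r} μ := fun x r hr =>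
    (integrableOn_norm_sub_left μ (integrableOn_norm_rpow_sub_finrank_Iic μ hα0 hr) x).const_mul _
  have hset : ∀ x s, MeasurableSet s → MeasurableSet {y : E | ‖x - y‖ ∈ s} := fun x s hs =>
    (show Measurable fun y : E => ‖x - y‖ by fun_prop) hs
  have hintOn : ∀ x r, 0 ≤ r →
      IntegrableOn (fun y => L (x - y) * (σ y - σ x)) {y | ‖x - y‖ ∈ Iic r} μ := fun x r hr =>
    Integrable.mono' (hmaj x r hr) (hmeas x).aestronglyMeasurable
      (Eventually.of_forall fun y => hpt x y)
  have hnear : ∀ x r, 0 ≤ r →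
      ∫ y in {y | ‖x - y‖ ∈ Iic r}, ‖L (x - y) * (σ y - σ x)‖ ∂μ ≤ A * M * c * r ^ α / α := by
    intro x r hr
    calc ∫ y in {y | ‖x - y‖ ∈ Iic r}, ‖L (x - y) * (σ y - σ x)‖ ∂μ
        ≤ ∫ y in {y | ‖x - y‖ ∈ Iic r}, A * M * ‖x - y‖ ^ (α - n) ∂μ :=
          integral_mono (hintOn x r hr).norm (hmaj x r hr) fun y => hpt x y
      _ = A * M * (c * (r ^ α / α)) := by
          rw [integral_const_mul, setIntegral_norm_sub_left μ (fun z => ‖z‖ ^ (α - n)),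
            setIntegral_norm_rpow_sub_finrank_Iic μ hα0 hr]
      _ = _ := by ring
  have hvanish : ∀ x, ∀ y ∉ {y | ‖x - y‖ ∈ Iic R}, L (x - y) * (σ y - σ x) = 0 := by
    intro x y hy
    rw [hsupp _ (not_le.1 hy), zero_mul]
  have hint : ∀ x, Integrable (fun y => L (x - y) * (σ y - σ x)) μ := fun x =>
    (integrableOn_iff_integrable_of_support_subset
      (Function.support_subset_iff'.2 (hvanish x))).1 (hintOn x R hR)
  refine ⟨hint, fun x => ?_, fun x x' => ?_⟩
  · rw [← setIntegral_eq_integral_of_forall_compl_eq_zero (hvanish x)]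
    have h1 : A * M * c * R ^ α / α ≤
        (7 * A * c / α + 2 * B * c / (1 - α) + A * c * R ^ α / α + 1) * M := by
      have h2 : 0 ≤ (7 * A * c / α + 2 * B * c / (1 - α) + 1) * M := by positivity
      have h3 : A * M * c * R ^ α / α = A * c * R ^ α / α * M := by ring
      rw [h3]
      linarith
    exact (norm_integral_le_integral_norm _).trans ((hnear x R hR).trans h1)
  rcases eq_or_ne x x' with rfl | hxx
  · simpa using by positivity
  set h : ℝ := ‖x - x'‖ with hh
  have hpos : 0 < h := norm_pos_iff.2 (sub_ne_zero.2 hxx)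
  set S : Set E := {y | ‖x - y‖ ∈ Iic (3 * h)} with hS
  have hSm : MeasurableSet S := hset x _ measurableSet_Iic
  have hSc : Sᶜ = {y | ‖x - y‖ ∈ Ioi (3 * h)} := by
    ext y; simp [hS]
  have hLfar : IntegrableOn (fun y => L (x - y)) Sᶜ μ := by
    rw [hSc]
    refine integrableOn_norm_sub_left μ ?_ x
    have hbd : IntegrableOn (fun z : E => ‖z‖ ^ (α - n)) {z | ‖z‖ ∈ Iic R} μ :=
      integrableOn_norm_rpow_sub_finrank_Iic μ hα0 hR
    have hm3 : MeasurableSet {z : E | ‖z‖ ∈ Ioi (3 * h)} := measurable_norm measurableSet_Ioi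
    have hmR : MeasurableSet {z : E | ‖z‖ ∈ Iic R} := measurable_norm measurableSet_Iic
    refine Integrable.mono' (g := {z : E | ‖z‖ ∈ Iic R}.indicator
      fun z => A * (3 * h) ^ (-α) * ‖z‖ ^ (α - n)) ?_ hLm.aestronglyMeasurable ?_
    · exact (((integrable_indicator_iff hmR).2 (hbd.const_mul _))).integrableOn
    · filter_upwards [ae_restrict_mem hm3] with z (hz : 3 * h < ‖z‖)
      by_cases hzR : ‖z‖ ∈ Iic R
      · rw [indicator_of_mem (show z ∈ {z : E | ‖z‖ ∈ Iic R} from hzR)]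
        have hz0 : 0 < ‖z‖ := by linarith
        calc ‖L z‖ ≤ A * ‖z‖ ^ (-n) := hL z
          _ = A * (‖z‖ ^ (-α) * ‖z‖ ^ (α - n)) := by rw [← rpow_add hz0]; ring_nf
          _ ≤ A * ((3 * h) ^ (-α) * ‖z‖ ^ (α - n)) := by
              gcongr ?_ * (?_ * ?_)
              exact rpow_le_rpow_of_nonpos (by positivity) hz.le (by linarith)
          _ = _ := by ring
      · rw [hsupp z (not_le.1 hzR), norm_zero]
        exact indicator_nonneg (fun _ _ => by positivity) _
  have hfar0 : ∫ y in Sᶜ, L (x - y) * (σ x' - σ x) ∂μ = 0 := by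
    rw [integral_mul_const, hSc, setIntegral_norm_sub_left, hmean _ (by positivity), zero_mul]
  have hdiff : ∀ y, L (x - y) * (σ y - σ x) - L (x' - y) * (σ y - σ x') =
      (L (x - y) - L (x' - y)) * (σ y - σ x') + L (x - y) * (σ x' - σ x) := fun y => by ring
  have hdiffint : IntegrableOn (fun y => (L (x - y) - L (x' - y)) * (σ y - σ x')) Sᶜ μ := by
    have := (((hint x).sub (hint x')).integrableOn (s := Sᶜ)).sub
      (hLfar.mul_const (σ x' - σ x))
    refine this.congr (Eventually.of_forall fun y => ?_)
    simp only [Pi.sub_apply]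
    ring
  have hfar : |∫ y in Sᶜ, (L (x - y) - L (x' - y)) * (σ y - σ x') ∂μ| ≤
      2 * B * M * c * h ^ α / (1 - α) := by
    have hmajf : IntegrableOn (fun y => 2 * B * h * M * ‖x - y‖ ^ (α - 1 - n)) Sᶜ μ := by
      rw [hSc]
      exact (integrableOn_norm_sub_left μ (integrableOn_norm_rpow_sub_finrank_Ioi μ
        (by linarith) (by positivity)) x).const_mul _
    have hval : ∫ y in Sᶜ, 2 * B * h * M * ‖x - y‖ ^ (α - 1 - n) ∂μ =
        2 * B * h * M * (c * ((3 * h) ^ (α - 1) / (1 - α))) := by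
      rw [hSc, integral_const_mul, setIntegral_norm_sub_left μ (fun z => ‖z‖ ^ (α - 1 - n)),
        setIntegral_norm_rpow_sub_finrank_Ioi μ (by linarith) (by positivity), neg_sub]
    calc |∫ y in Sᶜ, (L (x - y) - L (x' - y)) * (σ y - σ x') ∂μ|
        ≤ ∫ y in Sᶜ, 2 * B * h * M * ‖x - y‖ ^ (α - 1 - n) ∂μ := by
          rw [← norm_eq_abs]
          refine norm_integral_le_of_norm_le hmajf ?_
          filter_upwards [ae_restrict_mem hSm.compl] with y hy
          rw [hSc] at hy
          replace hy : 3 * h < ‖x - y‖ := hy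
          have hz0 : 0 < ‖x - y‖ := by linarith
          have hsub : (x' - y) - (x - y) = -(x - x') := by abel
          have hw : ‖(x' - y) - (x - y)‖ = h := by rw [hsub, norm_neg]
          have h1 : |L (x - y) - L (x' - y)| ≤ B * h * ‖x - y‖ ^ (-n - 1) := by
            have := hLip (x - y) (x' - y) (by rw [hw]; linarith)
            rwa [hw, abs_sub_comm] at this
          have h2 : ‖x' - y‖ ≤ 2 * ‖x - y‖ := by
            have h3 : x' - y = ((x' - y) - (x - y)) + (x - y) := by abel
            rw [h3]
            refine (norm_add_le _ _).trans ?_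
            rw [hw]; linarith
          have h4 : |σ y - σ x'| ≤ M * (2 * ‖x - y‖ ^ α) := by
            rw [abs_sub_comm]
            refine (hσ x' y).trans (mul_le_mul_of_nonneg_left ?_ hM)
            calc ‖x' - y‖ ^ α ≤ (2 * ‖x - y‖) ^ α := by gcongr
              _ = 2 ^ α * ‖x - y‖ ^ α := mul_rpow (by norm_num) hz0.le
              _ ≤ 2 * ‖x - y‖ ^ α := by
                gcongr
                simpa using rpow_le_rpow_of_exponent_le (by norm_num : (1 : ℝ) ≤ 2) hα1.le
          rw [norm_mul, norm_eq_abs, norm_eq_abs]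
          calc |L (x - y) - L (x' - y)| * |σ y - σ x'|
              ≤ (B * h * ‖x - y‖ ^ (-n - 1)) * (M * (2 * ‖x - y‖ ^ α)) :=
                mul_le_mul h1 h4 (abs_nonneg _) (by positivity)
            _ = 2 * B * h * M * (‖x - y‖ ^ (-n - 1) * ‖x - y‖ ^ α) := by ring
            _ = _ := by rw [← rpow_add hz0]; ring_nf
      _ = 2 * B * h * M * (c * ((3 * h) ^ (α - 1) / (1 - α))) := hval
      _ ≤ 2 * B * h * M * (c * (h ^ (α - 1) / (1 - α))) := by
          gcongr ?_ * (?_ * (?_ / ?_))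
          exact rpow_le_rpow_of_nonpos hpos (by linarith) (by linarith)
      _ = 2 * B * M * c * (h * h ^ (α - 1)) / (1 - α) := by ring
      _ = _ := by rw [rpow_sub_one hpos.ne', mul_div_cancel₀ _ hpos.ne']
  have hS' : S ⊆ {y | ‖x' - y‖ ∈ Iic (4 * h)} := by
    intro y (hy : ‖x - y‖ ≤ 3 * h)
    have h3 : x' - y = -(x - x') + (x - y) := by abel
    change ‖x' - y‖ ≤ 4 * h
    rw [h3]
    refine (norm_add_le _ _).trans ?_
    rw [norm_neg]; linarith
  have hpow : ∀ t : ℝ, 1 ≤ t → (t * h) ^ α ≤ t * h ^ α := fun t ht => by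
    rw [mul_rpow (by linarith) hpos.le]
    gcongr
    simpa using rpow_le_rpow_of_exponent_le ht hα1.le
  have hn1 : |∫ y in S, L (x - y) * (σ y - σ x) ∂μ| ≤ A * M * c * (3 * h ^ α) / α := by
    refine (norm_integral_le_integral_norm _).trans ((hnear x (3 * h) (by positivity)).trans ?_)
    gcongr
    exact hpow 3 (by norm_num)
  have hn2 : |∫ y in S, L (x' - y) * (σ y - σ x') ∂μ| ≤ A * M * c * (4 * h ^ α) / α := by
    refine (norm_integral_le_integral_norm _).trans
      ((setIntegral_mono_set (hint x').norm.integrableOn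
        (Eventually.of_forall fun _ => norm_nonneg _) hS'.eventuallyLE).trans
      ((hnear x' (4 * h) (by positivity)).trans ?_))
    gcongr
    exact hpow 4 (by norm_num)
  have hsplit : (∫ y, L (x - y) * (σ y - σ x) ∂μ) - ∫ y, L (x' - y) * (σ y - σ x') ∂μ =
      (∫ y in S, L (x - y) * (σ y - σ x) ∂μ) - (∫ y in S, L (x' - y) * (σ y - σ x') ∂μ) +
      ∫ y in Sᶜ, (L (x - y) - L (x' - y)) * (σ y - σ x') ∂μ := by
    rw [← integral_add_compl hSm (hint x), ← integral_add_compl hSm (hint x')]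
    have h5 : (∫ y in Sᶜ, L (x - y) * (σ y - σ x) ∂μ) -
        ∫ y in Sᶜ, L (x' - y) * (σ y - σ x') ∂μ =
        ∫ y in Sᶜ, (L (x - y) - L (x' - y)) * (σ y - σ x') ∂μ := by
      rw [← integral_sub (hint x).integrableOn (hint x').integrableOn]
      simp_rw [hdiff]
      rw [integral_add hdiffint (hLfar.mul_const _), hfar0, add_zero]
    linarith
  rw [hsplit]
  have hfin : A * M * c * (3 * h ^ α) / α + A * M * c * (4 * h ^ α) / α +
      2 * B * M * c * h ^ α / (1 - α) ≤
      (7 * A * c / α + 2 * B * c / (1 - α) + A * c * R ^ α / α + 1) * M * h ^ α := by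
    have h6 : 0 ≤ (A * c * R ^ α / α + 1) * M * h ^ α := by positivity
    have h7 : A * M * c * (3 * h ^ α) / α + A * M * c * (4 * h ^ α) / α +
      2 * B * M * c * h ^ α / (1 - α) = (7 * A * c / α + 2 * B * c / (1 - α)) * M * h ^ α := by
      ring
    rw [h7]
    linarith
  exact (abs_add_le _ _).trans ((add_le_add ((abs_sub _ _).trans (add_le_add hn1 hn2)) hfar).trans
    hfin)

end SingularIntegral

section Homogeneous

variable {E : Type*} [NormedAddCommGroup E] [NormedSpace ℝ E]

theorem exists_norm_le_of_homogeneous [FiniteDimensional ℝ E] {F : Type*}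
    [NormedAddCommGroup F] [NormedSpace ℝ F] {f : E → F} {p : ℝ}
    (hf : ContinuousOn f {x | x ≠ 0})
    (hom : ∀ c : ℝ, 0 < c → ∀ x : E, x ≠ 0 → f (c • x) = c ^ p • f x) :
    ∃ A, 0 ≤ A ∧ ∀ z, z ≠ 0 → ‖f z‖ ≤ A * ‖z‖ ^ p := by
  obtain ⟨A, hA⟩ := (isCompact_sphere (0 : E) 1).exists_bound_of_continuousOn
    (hf.mono fun x hx => ne_zero_of_mem_sphere one_ne_zero ⟨x, hx⟩)
  refine ⟨max A 0, le_max_right _ _, fun z hz => ?_⟩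
  have hz' : 0 < ‖z‖ := norm_pos_iff.2 hz
  have hmem : ‖z‖⁻¹ • z ∈ Metric.sphere (0 : E) 1 := by
    simp [norm_smul, hz'.ne']
  have hne : ‖z‖⁻¹ • z ≠ 0 := smul_ne_zero (inv_ne_zero hz'.ne') hz
  have h := hom ‖z‖ hz' _ hne
  rw [smul_inv_smul₀ hz'.ne'] at h
  rw [h, norm_smul, norm_of_nonneg (rpow_nonneg hz'.le p), mul_comm]
  gcongr
  exact (hA _ hmem).trans (le_max_left _ _)

theorem fderiv_smul_of_homogeneous {f : E → ℝ} {p : ℝ}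
    (hom : ∀ c : ℝ, 0 < c → ∀ x : E, x ≠ 0 → f (c • x) = c ^ p * f x)
    (c : ℝ) (hc : 0 < c) (x : E) (hx : x ≠ 0) :
    fderiv ℝ f (c • x) = c ^ (p - 1) • fderiv ℝ f x := by
  have h : (fun y => f (c • y)) =ᶠ[𝓝 x] c ^ p • f := by
    filter_upwards [isOpen_ne.mem_nhds hx] with y hy
    exact hom c hc y hy
  have h' := h.fderiv_eq (𝕜 := ℝ)
  rw [fderiv_comp_smul, fderiv_const_smul_field, Pi.smul_apply] at h'
  rw [rpow_sub_one hc.ne', div_eq_inv_mul, mul_smul, ← h',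
    inv_smul_smul₀ (ne_of_gt hc)]

/-- The mean value inequality for a function whose derivative has size `‖z‖ ^ q` with `q ≤ 0`. -/
theorem abs_sub_le_of_fderiv_le_rpow {f : E → ℝ} {q A : ℝ} (hA : 0 ≤ A) (hq : q ≤ 0)
    (hf : ∀ z, z ≠ 0 → DifferentiableAt ℝ f z)
    (hbound : ∀ z, z ≠ 0 → ‖fderiv ℝ f z‖ ≤ A * ‖z‖ ^ q) {z w : E} (hz : z ≠ 0)
    (h : 2 * ‖w - z‖ ≤ ‖z‖) :
    |f w - f z| ≤ A * (1 / 2) ^ q * ‖z‖ ^ q * ‖w - z‖ := by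
  have hz' : 0 < ‖z‖ := norm_pos_iff.2 hz
  have hball : ∀ y ∈ Metric.closedBall z (‖z‖ / 2), ‖z‖ / 2 ≤ ‖y‖ := by
    intro y hy
    rw [mem_closedBall_iff_norm'] at hy
    linarith [norm_sub_norm_le z y]
  have hne : ∀ y ∈ Metric.closedBall z (‖z‖ / 2), y ≠ 0 := fun y hy =>
    norm_pos_iff.1 ((half_pos hz').trans_le (hball y hy))
  refine (convex_closedBall z (‖z‖ / 2)).norm_image_sub_le_of_norm_fderiv_le (𝕜 := ℝ)
    (fun y hy => hf y (hne y hy)) (fun y hy => (hbound y (hne y hy)).trans ?_)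
    (Metric.mem_closedBall_self (by positivity)) ?_
  · rw [mul_assoc, ← mul_rpow (by norm_num) hz'.le]
    gcongr ?_ * ?_
    refine rpow_le_rpow_of_nonpos (by positivity) ?_ hq
    linarith [hball y hy]
  · rw [mem_closedBall_iff_norm]; linarith

variable [FiniteDimensional ℝ E] [MeasurableSpace E] [BorelSpace E] (μ : Measure E)
  [μ.IsAddHaarMeasure]

theorem integrable_comp_mul_of_continuousOn {f N : E → ℝ} {η : ℝ → ℝ} {a b D M : ℝ}
    (hf : ContinuousOn f {x | x ≠ 0}) (hN : Continuous N) (hN1 : ∀ z, ‖z‖ ≤ N z)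
    (hN2 : ∀ z, N z ≤ D * ‖z‖) (hD : 0 < D) (ha : 0 < a) (hη : Measurable η)
    (hηM : ∀ s, |η s| ≤ M) (hη0 : ∀ s, s ∉ Icc a b → η s = 0) :
    Integrable (fun z => η (N z) * f z) μ := by
  set S : Set E := {z | a / D ≤ ‖z‖} ∩ Metric.closedBall 0 b with hS
  have hSc : IsCompact S :=
    (isCompact_closedBall 0 b).inter_left (isClosed_le continuous_const continuous_norm)
  have hS0 : S ⊆ {x | x ≠ 0} := fun z hz =>
    norm_pos_iff.1 ((div_pos ha hD).trans_le hz.1)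
  have hfS : IntegrableOn f S μ := (hf.mono hS0).integrableOn_compact hSc
  have hint : IntegrableOn (fun z => η (N z) * f z) S μ :=
    hfS.bdd_mul (c := M) (hη.comp hN.measurable).aestronglyMeasurable
      (Eventually.of_forall fun z => hηM _)
  refine (integrableOn_iff_integrable_of_support_subset
    (Function.support_subset_iff'.2 fun z hz => ?_)).1 hint
  rw [hη0 _ fun hmem => hz ⟨?_, ?_⟩, zero_mul]
  · exact (div_le_iff₀' hD).2 (hmem.1.trans (hN2 z))
  · rw [mem_closedBall_zero_iff]; exact (hN1 z).trans hmem.2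

/-- Polar coordinates for the product of a function of a gauge `N`, homogeneous of degree `1`, and
a function `f` homogeneous of degree `-dim E`: the integral splits, and the angular factor depends
neither on `N` nor on the radial profile `η`. -/
theorem integral_comp_mul_of_homogeneous [Nontrivial E] {f N : E → ℝ} {η : ℝ → ℝ}
    (hf : ∀ c : ℝ, 0 < c → ∀ x : E, x ≠ 0 → f (c • x) = c ^ (-(Module.finrank ℝ E : ℝ)) * f x)
    (hN : ∀ c : ℝ, 0 < c → ∀ x : E, N (c • x) = c * N x) (hN0 : ∀ x, x ≠ 0 → 0 < N x)
    (hint : Integrable (fun z => η (N z) * f z) μ) :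
    ∫ z, η (N z) * f z ∂μ =
      (∫ ω : Metric.sphere (0 : E) 1, f ω ∂μ.toSphere) * ∫ s in Ioi (0 : ℝ), η s / s := by
  set n := Module.finrank ℝ E with hn
  have hn0 : 0 < n := Module.finrank_pos
  set G : Metric.sphere (0 : E) 1 × Ioi (0 : ℝ) → ℝ :=
    fun p => η (N ((p.2 : ℝ) • (p.1 : E))) * f ((p.2 : ℝ) • (p.1 : E)) with hG
  have hmp := μ.measurePreserving_homeomorphUnitSphereProd
  have hemb := (homeomorphUnitSphereProd E).measurableEmbedding
  have hcomp : ∀ z : ({(0)}ᶜ : Set E), G (homeomorphUnitSphereProd E z) =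
      η (N z.1) * f z.1 := by
    intro z
    have h := homeomorphUnitSphereProd_symm_apply_coe E (homeomorphUnitSphereProd E z)
    rw [Homeomorph.symm_apply_apply] at h
    simp only [hG]
    rw [← h]
  have h0 : MeasurableSet ({0}ᶜ : Set E) := (measurableSet_singleton _).compl
  have hGint : Integrable G (μ.toSphere.prod (Measure.volumeIoiPow (n - 1))) := by
    rw [← hmp.integrable_comp_emb hemb]
    have h1 : IntegrableOn (fun z => η (N z) * f z) ({0}ᶜ : Set E) μ := hint.integrableOn
    rw [integrableOn_iff_comap_subtypeVal h0] at h1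
    exact h1.congr (Eventually.of_forall fun z => (hcomp z).symm)
  calc ∫ z, η (N z) * f z ∂μ
      = ∫ z : ({(0)}ᶜ : Set E), η (N z.1) * f z.1 ∂(μ.comap (↑)) := by
        rw [integral_subtype_comap h0 fun z => η (N z) * f z, restrict_compl_singleton]
    _ = ∫ p, G p ∂(μ.toSphere.prod (Measure.volumeIoiPow (n - 1))) := by
        rw [← hmp.integral_comp hemb]
        exact integral_congr_ae (Eventually.of_forall fun z => (hcomp z).symm)
    _ = ∫ ω, ∫ r, G (ω, r) ∂(Measure.volumeIoiPow (n - 1)) ∂μ.toSphere := integral_prod _ hGint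
    _ = ∫ ω : Metric.sphere (0 : E) 1, f ω * (∫ s in Ioi (0 : ℝ), η s / s) ∂μ.toSphere := by
        refine integral_congr_ae (Eventually.of_forall fun ω => ?_)
        have hω : (ω : E) ≠ 0 := ne_zero_of_mem_sphere one_ne_zero ω
        have hNω := hN0 _ hω
        simp only [Measure.volumeIoiPow, ENNReal.ofReal]
        rw [integral_withDensity_eq_integral_smul
          ((measurable_subtype_coe.pow_const _).real_toNNReal),
          integral_subtype_comap measurableSet_Ioi fun r : ℝ => Real.toNNReal (r ^ (n - 1)) •
            (η (N (r • (ω : E))) * f (r • (ω : E)))]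
        have h2 : ∀ r ∈ Ioi (0 : ℝ), Real.toNNReal (r ^ (n - 1)) •
            (η (N (r • (ω : E))) * f (r • (ω : E))) =
            f ω * N ω * (fun s => η s / s) (N ω * r) := by
          intro r hr
          have hr0 : 0 < r := hr
          have hpow : r ^ (n - 1) * r ^ (-(n : ℝ)) = r⁻¹ := by
            rw [← rpow_natCast, ← rpow_add hr0, Nat.cast_pred hn0, ← rpow_neg_one]
            ring_nf
          rw [NNReal.smul_def, Real.coe_toNNReal _ (pow_nonneg hr0.le _), hN r hr0,
            hf r hr0 _ hω, smul_eq_mul]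
          calc r ^ (n - 1) * (η (r * N ω) * (r ^ (-(n : ℝ)) * f ω))
              = f ω * η (r * N ω) * (r ^ (n - 1) * r ^ (-(n : ℝ))) := by ring
            _ = _ := by
              rw [hpow, mul_comm r]
              field_simp
        rw [setIntegral_congr_fun measurableSet_Ioi h2, integral_const_mul,
          integral_comp_mul_left_Ioi (fun s => η s / s) 0 hNω, mul_zero, smul_eq_mul,
          ← mul_assoc, mul_assoc (f ω), mul_inv_cancel₀ hNω.ne', mul_one]
    _ = _ := integral_mul_const _ _

end Homogeneous

theorem setIntegral_Ioi_div_pos {η : ℝ → ℝ} {a b p q M : ℝ} (hη : Measurable η)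
    (hη0 : ∀ s, 0 ≤ η s) (hηM : ∀ s, η s ≤ M) (ha : 0 < a) (hsupp : ∀ s, s ∉ Icc a b → η s = 0)
    (hp : 0 ≤ p) (hpq : p < q) (hpos : ∀ s ∈ Ioo p q, 0 < η s) :
    0 < ∫ s in Ioi (0 : ℝ), η s / s := by
  have hint : Integrable (fun s => η s / s) := by
    refine Integrable.mono' (g := (Icc a b).indicator fun _ => M / a)
      ((integrable_indicator_iff measurableSet_Icc).2 (by simp [IntegrableOn]))
      (hη.div measurable_id).aestronglyMeasurable (Eventually.of_forall fun s => ?_)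
    by_cases hs : s ∈ Icc a b
    · have hs0 : 0 < s := ha.trans_le hs.1
      rw [indicator_of_mem hs, norm_of_nonneg (div_nonneg (hη0 s) hs0.le)]
      exact div_le_div₀ ((hη0 s).trans (hηM s)) (hηM s) ha hs.1
    · simp [hs, hsupp s hs]
  rw [setIntegral_pos_iff_support_of_nonneg_ae _ hint.integrableOn]
  · refine lt_of_lt_of_le ?_ (measure_mono (s := Ioo p q) fun s hs => ⟨?_, ?_⟩)
    · simpa using hpq
    · exact (div_pos (hpos s hs) (hp.trans_lt hs.1)).ne'
    · exact hp.trans_lt hs.1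
  · filter_upwards [ae_restrict_mem measurableSet_Ioi] with s hs
    exact div_nonneg (hη0 s) (le_of_lt hs)

section EuclideanGauge

variable {d : ℕ}

theorem norm_le_sqrt_sum_sq (z : Euc d) : ‖z‖ ≤ √(∑ l, z l ^ 2) :=
  (pi_norm_le_iff_of_nonneg (sqrt_nonneg _)).2 fun l =>
    abs_le_sqrt (Finset.single_le_sum (f := fun l => z l ^ 2) (fun _ _ => sq_nonneg _)
      (Finset.mem_univ l))

theorem sqrt_sum_sq_le (z : Euc d) : √(∑ l, z l ^ 2) ≤ √d * ‖z‖ := by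
  rw [← sqrt_sq (norm_nonneg z), ← sqrt_mul (Nat.cast_nonneg d)]
  refine sqrt_le_sqrt ?_
  calc ∑ l, z l ^ 2 ≤ ∑ _l : Fin d, ‖z‖ ^ 2 :=
        Finset.sum_le_sum fun l _ => sq_le_sq' (abs_le.1 (norm_le_pi_norm z l)).1
          (abs_le.1 (norm_le_pi_norm z l)).2
    _ = d * ‖z‖ ^ 2 := by simp

theorem sqrt_sum_sq_smul (c : ℝ) (hc : 0 < c) (z : Euc d) :
    √(∑ l, (c • z) l ^ 2) = c * √(∑ l, z l ^ 2) := by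
  have h : ∑ l, (c • z) l ^ 2 = c ^ 2 * ∑ l, z l ^ 2 := by
    rw [Finset.mul_sum]
    exact Finset.sum_congr rfl fun l _ => by simp [mul_pow]
  rw [h, sqrt_mul (sq_nonneg c), sqrt_sq hc.le]

theorem sq_sqrt_sum_sq (z : Euc d) : √(∑ l, z l ^ 2) ^ 2 = ∑ l, z l ^ 2 :=
  sq_sqrt (Finset.sum_nonneg fun _ _ => sq_nonneg _)

theorem hasFDerivAt_sum_sq (z : Euc d) :
    HasFDerivAt (fun y : Euc d => ∑ l, y l ^ 2)
      (∑ l, (2 * z l) • (ContinuousLinearMap.proj l : Euc d →L[ℝ] ℝ)) z := by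
  refine HasFDerivAt.fun_sum fun l _ => ?_
  have h := (hasFDerivAt_apply (𝕜 := ℝ) l z).pow 2
  refine h.congr_fderiv ?_
  ext v
  simp

end EuclideanGauge

/-- A smooth bump on `(0, ∞)`, supported in `[1, 3]`. -/
theorem exists_smooth_bump : ∃ φ : ℝ → ℝ, ContDiff ℝ (⊤ : ℕ∞) φ ∧ (∀ s, φ s ∈ Icc (0 : ℝ) 1) ∧
    (∀ s, s ∉ Icc (1 : ℝ) 3 → φ s = 0) ∧ ∀ s ∈ Ioo (1 : ℝ) 3, 0 < φ s := by
  let φ : ContDiffBump (2 : ℝ) := ⟨1 / 2, 1, by norm_num, by norm_num⟩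
  have hball : Metric.ball (2 : ℝ) 1 = Ioo 1 3 := by rw [Real.ball_eq_Ioo]; norm_num
  refine ⟨φ, φ.contDiff, fun s => ⟨φ.nonneg, φ.le_one⟩, fun s hs => ?_, fun s hs => ?_⟩
  · refine φ.zero_of_le_dist ?_
    by_contra h
    have : s ∈ Metric.ball (2 : ℝ) 1 := not_le.1 h
    rw [hball] at this
    exact hs (Ioo_subset_Icc_self this)
  · exact φ.pos_of_mem_ball (by rw [show φ.rOut = 1 from rfl, hball]; exact hs)

section SphericalMean

variable {d : ℕ} {k : Euc d → ℝ}

theorem integral_sphere_eq_zero_of_annulus [Nonempty (Fin d)]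
    (hk : ContinuousOn k {x : Euc d | x ≠ 0})
    (hk_hom : ∀ c : ℝ, 0 < c → ∀ x : Euc d, x ≠ 0 → k (c • x) = c ^ (-(d : ℝ)) * k x)
    (hk_mean : (∫ z in {z : Euc d | 1 ≤ ‖z‖ ∧ ‖z‖ ≤ 2}, k z) = 0) :
    ∫ ω : Metric.sphere (0 : Euc d) 1, k ω ∂(volume : Measure (Euc d)).toSphere = 0 := by
  set η : ℝ → ℝ := (Icc (1 : ℝ) 2).indicator fun _ => 1 with hη
  have hηm : Measurable η := measurable_const.indicator measurableSet_Icc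
  have hη0 : ∀ s, 0 ≤ η s := fun s => indicator_nonneg (fun _ _ => zero_le_one) s
  have hη1 : ∀ s, η s ≤ 1 := fun s => indicator_le_self' (fun _ _ => zero_le_one) s
  have hsupp : ∀ s, s ∉ Icc (1 : ℝ) 2 → η s = 0 := fun s hs => indicator_of_notMem hs _
  have hint : Integrable (fun z : Euc d => η ‖z‖ * k z) :=
    integrable_comp_mul_of_continuousOn volume hk continuous_norm (fun _ => le_rfl)
      (fun z => (one_mul ‖z‖).ge) one_pos one_pos hηm
      (fun s => by rw [abs_of_nonneg (hη0 s)]; exact hη1 s) hsupp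
  have hpolar := integral_comp_mul_of_homogeneous volume (f := k) (N := fun z : Euc d => ‖z‖)
    (by simpa using hk_hom) (fun c hc x => by rw [norm_smul, norm_of_nonneg hc.le])
    (fun x hx => norm_pos_iff.2 hx) hint
  have hlhs : ∫ z : Euc d, η ‖z‖ * k z = 0 := by
    have hm : MeasurableSet {z : Euc d | 1 ≤ ‖z‖ ∧ ‖z‖ ≤ 2} :=
      measurable_norm (measurableSet_Icc (a := (1 : ℝ)) (b := 2))
    rw [← hk_mean, ← integral_indicator hm]
    refine integral_congr_ae (Eventually.of_forall fun z => ?_)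
    by_cases hz : 1 ≤ ‖z‖ ∧ ‖z‖ ≤ 2 <;> simp [hη, indicator, hz]
  rw [hlhs] at hpolar
  refine (mul_eq_zero.1 hpolar.symm).resolve_right (ne_of_gt ?_)
  exact setIntegral_Ioi_div_pos hηm hη0 hη1 one_pos hsupp zero_le_one one_lt_two
    fun s hs => by simp [hη, Ioo_subset_Icc_self hs]

/-- If `k` is homogeneous of degree `-d` with zero spherical mean, then so is `z_j ∂_i k`. -/
theorem integral_sphere_coord_mul_fderiv_eq_zero [Nonempty (Fin d)]
    (hk_smooth : ContDiffOn ℝ (⊤ : ℕ∞) k {x : Euc d | x ≠ 0})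
    (hk_hom : ∀ c : ℝ, 0 < c → ∀ x : Euc d, x ≠ 0 → k (c • x) = c ^ (-(d : ℝ)) * k x)
    (hk_mean : ∫ ω : Metric.sphere (0 : Euc d) 1, k ω ∂(volume : Measure (Euc d)).toSphere = 0)
    (i j : Fin d)
    (hK_cont : ContinuousOn (fun z : Euc d => z j * fderiv ℝ k z (Pi.single i 1)) {x | x ≠ 0})
    (hK_hom : ∀ c : ℝ, 0 < c → ∀ x : Euc d, x ≠ 0 →
      (c • x) j * fderiv ℝ k (c • x) (Pi.single i 1) =
        c ^ (-(d : ℝ)) * (x j * fderiv ℝ k x (Pi.single i 1))) :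
    ∫ ω : Metric.sphere (0 : Euc d) 1, (ω : Euc d) j * fderiv ℝ k ω (Pi.single i 1)
      ∂(volume : Measure (Euc d)).toSphere = 0 := by
  obtain ⟨φ, hφ, hφ01, hφsupp, hφpos⟩ := exists_smooth_bump
  set N : Euc d → ℝ := fun z => √(∑ l, z l ^ 2) with hN
  set K : Euc d → ℝ := fun z => z j * fderiv ℝ k z (Pi.single i 1) with hK
  have hd : 0 < d := Fin.pos_iff_nonempty.2 inferInstance
  have hNcont : Continuous N := by fun_prop
  have hNpos : ∀ x : Euc d, x ≠ 0 → 0 < N x := fun x hx =>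
    (norm_pos_iff.2 hx).trans_le (norm_le_sqrt_sum_sq x)
  have hNsq : ∀ z, N z ^ 2 = ∑ l, z l ^ 2 := sq_sqrt_sum_sq
  have hkc : ContinuousOn k {x : Euc d | x ≠ 0} := hk_smooth.continuousOn
  have hkd : ∀ z : Euc d, z ≠ 0 → DifferentiableAt ℝ k z := fun z hz =>
    (hk_smooth.contDiffAt (isOpen_ne.mem_nhds hz)).differentiableAt (by simp)
  have hφd : Differentiable ℝ φ := hφ.differentiable (by simp)
  have hφ'c : Continuous (deriv φ) := hφ.continuous_deriv (by simp)
  have hφ'supp : ∀ s, s ∉ Icc (1 : ℝ) 3 → deriv φ s = 0 := fun s hs => by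
    have h : φ =ᶠ[𝓝 s] fun _ => 0 := by
      filter_upwards [isClosed_Icc.isOpen_compl.mem_nhds hs] with t ht using hφsupp t ht
    rw [h.deriv_eq, deriv_const]
  have hsq : ∀ s : ℝ, s ∉ Icc (-2 : ℝ) 2 → s ^ 2 ∉ Icc (1 : ℝ) 3 := fun s hs hs' =>
    hs ⟨by nlinarith [hs'.2], by nlinarith [hs'.2]⟩
  set ρ : ℝ → ℝ := fun s => φ (s ^ 2) with hρ
  have hρsmooth : ContDiff ℝ (⊤ : ℕ∞) ρ := hφ.comp (contDiff_id.pow 2)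
  have hρsupp : HasCompactSupport ρ := HasCompactSupport.intro (isCompact_Icc (a := -2) (b := 2))
    fun s hs => hφsupp _ (hsq s hs)
  -- the radial profiles, cut off to the positive half line where `N` takes its values
  set η₁ : ℝ → ℝ := (Icc (1 : ℝ) 2).indicator ρ with hη₁
  set η₂ : ℝ → ℝ := (Icc (1 : ℝ) 2).indicator fun s => 2 * s ^ 2 * deriv φ (s ^ 2) with hη₂
  have hmem : ∀ s : ℝ, 0 ≤ s → s ∉ Icc (1 : ℝ) 2 → s ^ 2 ∉ Icc (1 : ℝ) 3 := fun s hs0 hs hs' =>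
    hs ⟨by nlinarith [hs'.1], by nlinarith [hs'.2]⟩
  have hη₁eq : ∀ s, 0 ≤ s → η₁ s = φ (s ^ 2) := fun s hs0 => by
    by_cases hs : s ∈ Icc (1 : ℝ) 2
    · simp [hη₁, hs, hρ]
    · rw [hη₁, indicator_of_notMem hs, hφsupp _ (hmem s hs0 hs)]
  have hη₂eq : ∀ s, 0 ≤ s → η₂ s = 2 * s ^ 2 * deriv φ (s ^ 2) := fun s hs0 => by
    by_cases hs : s ∈ Icc (1 : ℝ) 2
    · simp [hη₂, hs]
    · rw [hη₂, indicator_of_notMem hs, hφ'supp _ (hmem s hs0 hs), mul_zero]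
  have hη₁m : Measurable η₁ := hρsmooth.continuous.measurable.indicator measurableSet_Icc
  have hη₂m : Measurable η₂ :=
    (by fun_prop : Continuous fun s => 2 * s ^ 2 * deriv φ (s ^ 2)).measurable.indicator
      measurableSet_Icc
  have hη₁0 : ∀ s, 0 ≤ η₁ s := fun s => indicator_nonneg (fun t _ => (hφ01 _).1) s
  have hη₁1 : ∀ s, η₁ s ≤ 1 := fun s =>
    indicator_apply_le' (fun _ => (hφ01 _).2) fun _ => zero_le_one
  have hη₁supp : ∀ s, s ∉ Icc (1 : ℝ) 2 → η₁ s = 0 := fun s hs => indicator_of_notMem hs _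
  have hη₂supp : ∀ s, s ∉ Icc (1 : ℝ) 2 → η₂ s = 0 := fun s hs => indicator_of_notMem hs _
  obtain ⟨M, hM⟩ := (isCompact_Icc (a := (1 : ℝ)) (b := 2)).exists_bound_of_continuousOn
    (by fun_prop : Continuous fun s => 2 * s ^ 2 * deriv φ (s ^ 2)).continuousOn
  have hη₂M : ∀ s, |η₂ s| ≤ max M 0 := fun s => by
    by_cases hs : s ∈ Icc (1 : ℝ) 2
    · rw [hη₂, indicator_of_mem hs]; exact (hM s hs).trans (le_max_left _ _)
    · rw [hη₂supp s hs, abs_zero]; exact le_max_right _ _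
  have hint₁ : ∀ f : Euc d → ℝ, ContinuousOn f {x | x ≠ 0} →
      Integrable (fun z => η₁ (N z) * f z) := fun f hf =>
    integrable_comp_mul_of_continuousOn volume hf hNcont norm_le_sqrt_sum_sq sqrt_sum_sq_le
      (sqrt_pos.2 (by exact_mod_cast hd)) one_pos hη₁m
      (fun s => by rw [abs_of_nonneg (hη₁0 s)]; exact hη₁1 s) hη₁supp
  have hint₂ : ∀ f : Euc d → ℝ, ContinuousOn f {x | x ≠ 0} →
      Integrable (fun z => η₂ (N z) * f z) := fun f hf =>
    integrable_comp_mul_of_continuousOn volume hf hNcont norm_le_sqrt_sum_sq sqrt_sum_sq_le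
      (sqrt_pos.2 (by exact_mod_cast hd)) one_pos hη₂m hη₂M hη₂supp
  set Q : Euc d → ℝ := fun z => z i * z j * k z / ∑ l, z l ^ 2 with hQ
  have hq0 : ∀ z : Euc d, z ≠ 0 → ∑ l, z l ^ 2 ≠ 0 := fun z hz => by
    rw [← hNsq]; exact pow_ne_zero 2 (hNpos z hz).ne'
  have hQcont : ContinuousOn Q {x | x ≠ 0} := by
    refine ContinuousOn.div (ContinuousOn.mul (by fun_prop) hkc) (by fun_prop) hq0
  have hQhom : ∀ c : ℝ, 0 < c → ∀ x : Euc d, x ≠ 0 → Q (c • x) = c ^ (-(d : ℝ)) * Q x := by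
    intro c hc x hx
    have h : ∑ l, (c • x) l ^ 2 = c ^ 2 * ∑ l, x l ^ 2 := by
      rw [Finset.mul_sum]
      exact Finset.sum_congr rfl fun l _ => by simp [mul_pow]
    have hq := hq0 x hx
    simp only [hQ]
    rw [h, hk_hom c hc x hx]
    simp only [Pi.smul_apply, smul_eq_mul]
    field_simp
  set g : Euc d → ℝ := fun z => z j * k z with hg
  have hgcont : ContinuousOn g {x | x ≠ 0} := ContinuousOn.mul (by fun_prop) hkc
  set ψ : Euc d → ℝ := fun z => φ (∑ l, z l ^ 2) with hψ
  have hψN : ∀ z, ψ z = η₁ (N z) := fun z => by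
    rw [hη₁eq _ (sqrt_nonneg _), hNsq]
  have hψderiv : ∀ z, fderiv ℝ ψ z (Pi.single i 1) = deriv φ (∑ l, z l ^ 2) * (2 * z i) := by
    intro z
    have h := (hφd (∑ l, z l ^ 2)).hasDerivAt.comp_hasFDerivAt z (hasFDerivAt_sum_sq z)
    have h' : HasFDerivAt ψ _ z := h
    rw [h'.fderiv]
    simp [Pi.single_apply]
  have hgderiv : ∀ z, z ≠ 0 → fderiv ℝ g z (Pi.single i 1) =
      K z + (if j = i then 1 else 0) * k z := by
    intro z hz
    have h := (hasFDerivAt_apply (𝕜 := ℝ) j z).mul (hkd z hz).hasFDerivAt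
    have h' : HasFDerivAt g _ z := h
    rw [h'.fderiv]
    simp [Pi.single_apply, hK]
  have hne : ∀ᵐ z : Euc d, z ≠ 0 := by
    simp [ae_iff]
  have hleft : (fun z => ψ z * fderiv ℝ g z (Pi.single i 1)) =ᵐ[volume]
      fun z => η₁ (N z) * K z + (if j = i then 1 else 0) * (η₁ (N z) * k z) := by
    filter_upwards [hne] with z hz
    rw [hgderiv z hz, hψN]
    ring
  have hright : (fun z => fderiv ℝ ψ z (Pi.single i 1) * g z) =ᵐ[volume]
      fun z => η₂ (N z) * Q z := by
    filter_upwards [hne] with z hz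
    have hq := hq0 z hz
    rw [hψderiv, hη₂eq _ (sqrt_nonneg _), hNsq]
    simp only [hQ, hg]
    field_simp
  have hk1 := hint₁ k hkc
  have hK1 := hint₁ K hK_cont
  have hleftint : Integrable fun z =>
      η₁ (N z) * K z + (if j = i then 1 else 0) * (η₁ (N z) * k z) := hK1.add (hk1.const_mul _)
  have hzero : ∀ z ∈ tsupport ψ, z ≠ 0 := by
    intro z hz hz0
    have hcl : IsClosed {z : Euc d | (1 : ℝ) ≤ ∑ l, z l ^ 2} :=
      isClosed_le continuous_const (by fun_prop)
    have hsub : tsupport ψ ⊆ {z : Euc d | (1 : ℝ) ≤ ∑ l, z l ^ 2} := by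
      refine closure_minimal (fun y hy => ?_) hcl
      by_contra hlt
      exact hy (hφsupp _ fun hm => hlt hm.1)
    have := hsub hz
    simp [hz0] at this
    linarith
  have hparts := integral_mul_fderiv_eq_neg_fderiv_mul_of_integrable (μ := (volume : Measure (Euc d)))
    (f := ψ) (g := g) (v := Pi.single i 1)
    ((hint₂ Q hQcont).congr hright.symm) (hleftint.congr hleft.symm)
    ((hint₁ g hgcont).congr (Eventually.of_forall fun z => by simp only [hψN]))
    (fun z _ => (hφd _).comp z (hasFDerivAt_sum_sq z).differentiableAt)
    (fun z hz => (differentiableAt_apply j z).mul (hkd z (hzero z hz)))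
  rw [integral_congr_ae hleft, integral_congr_ae hright,
    integral_add hK1 (hk1.const_mul _), integral_const_mul] at hparts
  have hpolar : ∀ (η : ℝ → ℝ) (f : Euc d → ℝ),
      (∀ c : ℝ, 0 < c → ∀ x : Euc d, x ≠ 0 → f (c • x) = c ^ (-(d : ℝ)) * f x) →
      Integrable (fun z => η (N z) * f z) → ∫ z, η (N z) * f z =
      (∫ ω : Metric.sphere (0 : Euc d) 1, f ω ∂(volume : Measure (Euc d)).toSphere) *
        ∫ s in Ioi (0 : ℝ), η s / s := fun η f hf hint =>
    integral_comp_mul_of_homogeneous volume (by simpa using hf) sqrt_sum_sq_smul hNpos hint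
  have hη₂int : ∫ s in Ioi (0 : ℝ), η₂ s / s = 0 := by
    have h1 : ∀ s ∈ Ioi (0 : ℝ), η₂ s / s = deriv ρ s := by
      intro s hs
      have hs0 : s ≠ 0 := ne_of_gt hs
      have h2 : HasDerivAt ρ (deriv φ (s ^ 2) * (2 * s)) s := by
        have h3 := (hφd (s ^ 2)).hasDerivAt.comp s (hasDerivAt_pow 2 s)
        exact HasDerivAt.congr_deriv (f := ρ) h3 (by simp)
      rw [h2.deriv, hη₂eq s (le_of_lt hs)]
      field_simp
    rw [setIntegral_congr_fun measurableSet_Ioi h1,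
      hρsupp.integral_Ioi_deriv_eq (hρsmooth.of_le (by simp)) 0]
    simp [hρ, hφsupp 0 (by simp)]
  rw [hpolar η₁ K hK_hom hK1, hpolar η₁ k hk_hom hk1, hk_mean, hpolar η₂ Q hQhom
    (hint₂ Q hQcont), hη₂int] at hparts
  simp only [zero_mul, mul_zero, add_zero, neg_zero] at hparts
  refine (mul_eq_zero.1 hparts).resolve_right (ne_of_gt ?_)
  refine setIntegral_Ioi_div_pos (p := 1) (q := 3 / 2) hη₁m hη₁0 hη₁1 one_pos hη₁supp
    zero_le_one (by norm_num) fun s hs => ?_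
  rw [hη₁eq s (by linarith [hs.1])]
  exact hφpos _ ⟨by nlinarith [hs.1], by nlinarith [hs.1, hs.2]⟩

end SphericalMean

/-- Schauder estimate for a singular kernel `K` homogeneous of degree `-dim E` with zero spherical
mean, truncated by a smooth radial cutoff. -/
theorem exists_holder_bound_cutoff_mul_homogeneous {E : Type*} [NormedAddCommGroup E]
    [NormedSpace ℝ E] [FiniteDimensional ℝ E] [MeasurableSpace E] [BorelSpace E] [Nontrivial E]
    (μ : Measure E) [μ.IsAddHaarMeasure] {α : ℝ} (hα0 : 0 < α) (hα1 : α < 1)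
    {K : E → ℝ} (hKm : Measurable K) (hK0 : K 0 = 0) (hK : ContDiffOn ℝ 1 K {x | x ≠ 0})
    (hK_hom : ∀ c : ℝ, 0 < c → ∀ x : E, x ≠ 0 →
      K (c • x) = c ^ (-(Module.finrank ℝ E : ℝ)) * K x)
    (hK_mean : ∫ ω : Metric.sphere (0 : E) 1, K ω ∂μ.toSphere = 0)
    {χ : ℝ → ℝ} (hχ : ContDiff ℝ 1 χ) (hχ_range : ∀ r, χ r ∈ Icc (0 : ℝ) 1)
    (hχ_supp : HasCompactSupport χ) :
    ∃ C > (0 : ℝ), ∀ (σ : E → ℝ) (M : ℝ), Measurable σ → 0 ≤ M →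
      (∀ x y, |σ x - σ y| ≤ M * ‖x - y‖ ^ α) →
      (∀ x, Integrable (fun y => χ ‖x - y‖ * K (x - y) * (σ y - σ x)) μ) ∧
      (∀ x, |∫ y, χ ‖x - y‖ * K (x - y) * (σ y - σ x) ∂μ| ≤ C * M) ∧
      ∀ x x', |(∫ y, χ ‖x - y‖ * K (x - y) * (σ y - σ x) ∂μ) -
        ∫ y, χ ‖x' - y‖ * K (x' - y) * (σ y - σ x') ∂μ| ≤ C * M * ‖x - x'‖ ^ α := by
  set n : ℝ := (Module.finrank ℝ E : ℝ) with hn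
  have hn0 : 0 ≤ n := Nat.cast_nonneg _
  have hKd : ∀ z, z ≠ 0 → DifferentiableAt ℝ K z := fun z hz =>
    (hK.contDiffAt (isOpen_ne.mem_nhds hz)).differentiableAt one_ne_zero
  obtain ⟨A, hA, hKA⟩ := exists_norm_le_of_homogeneous hK.continuousOn hK_hom
  obtain ⟨A', hA', hKA'⟩ := exists_norm_le_of_homogeneous
    (hK.continuousOn_fderiv_of_isOpen isOpen_ne le_rfl)
    (fun c hc x hx => fderiv_smul_of_homogeneous hK_hom c hc x hx)
  obtain ⟨Λ, hΛ⟩ := hχ.lipschitzWith_of_hasCompactSupport hχ_supp one_ne_zero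
  obtain ⟨R, hR, hχR⟩ : ∃ R : ℝ, 0 < R ∧ ∀ r, R < r → χ r = 0 := by
    obtain ⟨R, hR, hsub⟩ := hχ_supp.isCompact.isBounded.subset_closedBall_lt 0 0
    refine ⟨R, hR, fun r hr => ?_⟩
    by_contra h
    have := hsub (subset_tsupport _ h)
    rw [mem_closedBall_zero_iff, norm_eq_abs] at this
    linarith [le_abs_self r]
  have hχ1 : ∀ r, |χ r| ≤ 1 := fun r => by
    rw [abs_of_nonneg (hχ_range r).1]; exact (hχ_range r).2
  refine exists_holder_bound_singular_integral μ hα0 hα1 (L := fun z => χ ‖z‖ * K z)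
    (A := A) (B := A' * (1 / 2) ^ (-n - 1) + Λ * (A * (1 / 2) ^ (-n) * (2 * R))) (R := R)
    ((hχ.continuous.measurable.comp measurable_norm).mul hKm) hA (by positivity) hR.le
    (fun z => ?_) (fun z hz => by rw [hχR _ hz, zero_mul]) (fun z w h => ?_) (fun a ha => ?_)
  · rw [abs_mul]
    rcases eq_or_ne z 0 with rfl | hz
    · rw [hK0, abs_zero, mul_zero]; positivity
    · exact (mul_le_of_le_one_left (abs_nonneg _) (hχ1 _)).trans (hKA z hz)
  · rcases eq_or_ne z 0 with rfl | hz
    · have hw : w = 0 := by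
        rw [sub_zero, norm_zero] at h
        exact norm_le_zero_iff.1 (by linarith)
      simp [hw]
    have hz' : 0 < ‖z‖ := norm_pos_iff.2 hz
    have hwz : ‖z‖ / 2 ≤ ‖w‖ := by linarith [norm_sub_norm_le z w, norm_sub_rev z w]
    have hw : w ≠ 0 := norm_pos_iff.1 (by linarith)
    have hKlip := abs_sub_le_of_fderiv_le_rpow hA' (by linarith) hKd hKA' hz h
    have hcut : |(χ ‖w‖ - χ ‖z‖) * K w| ≤
        Λ * (A * (1 / 2) ^ (-n) * (2 * R)) * ‖w - z‖ * ‖z‖ ^ (-n - 1) := by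
      rcases lt_or_ge (2 * R) ‖z‖ with hzR | hzR
      · rw [hχR ‖w‖ (by linarith), hχR ‖z‖ (by linarith), sub_zero, zero_mul, abs_zero]
        positivity
      have h1 : |χ ‖w‖ - χ ‖z‖| ≤ Λ * ‖w - z‖ := by
        refine (hΛ.dist_le_mul ‖w‖ ‖z‖).trans ?_
        gcongr
        exact abs_norm_sub_norm_le w z
      have h2 : |K w| ≤ A * (1 / 2) ^ (-n) * (2 * R) * ‖z‖ ^ (-n - 1) := by
        calc |K w| ≤ A * ‖w‖ ^ (-n) := hKA w hw
          _ ≤ A * (1 / 2 * ‖z‖) ^ (-n) := by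
            gcongr ?_ * ?_
            exact rpow_le_rpow_of_nonpos (by positivity) (by linarith) (by linarith)
          _ = A * (1 / 2) ^ (-n) * ‖z‖ * ‖z‖ ^ (-n - 1) := by
            rw [mul_rpow (by norm_num) hz'.le, rpow_sub_one hz'.ne']
            field_simp
          _ ≤ _ := by gcongr
      rw [abs_mul]
      calc |χ ‖w‖ - χ ‖z‖| * |K w|
          ≤ (Λ * ‖w - z‖) * (A * (1 / 2) ^ (-n) * (2 * R) * ‖z‖ ^ (-n - 1)) :=
            mul_le_mul h1 h2 (abs_nonneg _) (by positivity)
        _ = _ := by ring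
    have hmain : |χ ‖z‖ * (K w - K z)| ≤ A' * (1 / 2) ^ (-n - 1) * ‖w - z‖ * ‖z‖ ^ (-n - 1) := by
      rw [abs_mul]
      refine (mul_le_of_le_one_left (abs_nonneg _) (hχ1 _)).trans (hKlip.trans_eq ?_)
      ring
    calc |χ ‖w‖ * K w - χ ‖z‖ * K z|
        = |χ ‖z‖ * (K w - K z) + (χ ‖w‖ - χ ‖z‖) * K w| := by ring_nf
      _ ≤ _ := (abs_add_le _ _).trans ((add_le_add hmain hcut).trans_eq (by ring))
  · set η : ℝ → ℝ := (Ioi a).indicator χ with hη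
    have hηm : Measurable η := hχ.continuous.measurable.indicator measurableSet_Ioi
    have hη1 : ∀ s, |η s| ≤ 1 := fun s => by
      by_cases hs : s ∈ Ioi a
      · rw [hη, indicator_of_mem hs]; exact hχ1 s
      · rw [hη, indicator_of_notMem hs, abs_zero]; exact zero_le_one
    have hηsupp : ∀ s, s ∉ Icc a R → η s = 0 := fun s hs => by
      by_cases hsa : s ∈ Ioi a
      · rw [hη, indicator_of_mem hsa]
        exact hχR s (not_le.1 fun h => hs ⟨le_of_lt hsa, h⟩)
      · exact indicator_of_notMem hsa _
    have hint : Integrable (fun z : E => η ‖z‖ * K z) μ :=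
      integrable_comp_mul_of_continuousOn μ hK.continuousOn continuous_norm (fun _ => le_rfl)
        (fun z => (one_mul ‖z‖).ge) one_pos ha hηm hη1 hηsupp
    have hpolar := integral_comp_mul_of_homogeneous μ (f := K) (N := fun z : E => ‖z‖)
      hK_hom (fun c hc x => by rw [norm_smul, norm_of_nonneg hc.le])
      (fun x hx => norm_pos_iff.2 hx) hint
    rw [hK_mean, zero_mul] at hpolar
    have hm : MeasurableSet {z : E | ‖z‖ ∈ Ioi a} := measurable_norm measurableSet_Ioi
    rw [← hpolar, ← integral_indicator hm]
    refine integral_congr_ae (Eventually.of_forall fun z => ?_)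
    by_cases hz : a < ‖z‖ <;> simp [hη, indicator, hz]

theorem InCa.continuous {d : ℕ} {F : Type*} [NormedAddCommGroup F] {α M : ℝ} {f : Euc d → F}
    (hα : 0 < α) (h : InCa α M f) : Continuous f := by
  refine continuous_iff_continuousAt.2 fun x => ?_
  refine tendsto_iff_norm_sub_tendsto_zero.2 (squeeze_zero (fun _ => norm_nonneg _)
    (fun y => h.2 y x) ?_)
  have hc : Continuous fun y : Euc d => M * ‖y - x‖ ^ α :=
    continuous_const.mul ((continuous_id.sub continuous_const).norm.rpow_const
      fun _ => Or.inr hα.le)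
  simpa [zero_rpow hα.ne'] using hc.tendsto x

/-- the estimate for `I(x)` in the proof of Lemma `steadycomm`: with
`K(z) = z_j ∂_i k(z)` and a smooth cutoff `χ`, the absolutely convergent integral
`I(x) = ∫ χ(|x−y|) K(x−y) (σ(y)−σ(x)) dy` defines a function whose `C^α` norm is bounded by
`C‖σ‖_{C^α}`. -/
theorem stmt17 (d : ℕ) (hd : 1 ≤ d) (α : ℝ) (hα0 : 0 < α) (hα1 : α < 1)
    (k : Euc d → ℝ)
    (hk_smooth : ContDiffOn ℝ (⊤ : ℕ∞) k {x : Euc d | x ≠ 0})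
    (hk_hom : ∀ c : ℝ, 0 < c → ∀ x : Euc d, x ≠ 0 → k (c • x) = c ^ (-(d : ℝ)) * k x)
    (hk_mean : ∀ r₁ r₂ : ℝ, 0 < r₁ → r₁ ≤ r₂ →
      (∫ z in {z : Euc d | r₁ ≤ ‖z‖ ∧ ‖z‖ ≤ r₂}, k z) = 0)
    (χ : ℝ → ℝ) (hχ_smooth : ContDiff ℝ (⊤ : ℕ∞) χ) (hχ_range : ∀ r, χ r ∈ Icc (0 : ℝ) 1)
    (hχ_one : ∀ r ∈ Icc (0 : ℝ) 1, χ r = 1) (hχ_supp : HasCompactSupport χ)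
    (i j : Fin d) :
    ∃ C > (0 : ℝ), ∀ (σ : Euc d → ℝ) (Mσ : ℝ), InCa α Mσ σ →
      (∀ x : Euc d, Integrable (fun y : Euc d =>
        χ ‖x - y‖ * ((x - y) j * fderiv ℝ k (x - y) (Pi.single i 1)) * (σ y - σ x))
        volume) ∧
      InCa α (C * Mσ)
        (fun x : Euc d => ∫ y : Euc d,
          χ ‖x - y‖ * ((x - y) j * fderiv ℝ k (x - y) (Pi.single i 1)) * (σ y - σ x)) := by
  have : Nonempty (Fin d) := ⟨i⟩
  set K : Euc d → ℝ := fun z => z j * fderiv ℝ k z (Pi.single i 1) with hK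
  have hfin : (Module.finrank ℝ (Euc d) : ℝ) = d := by simp
  have hK_smooth : ContDiffOn ℝ 1 K {x : Euc d | x ≠ 0} :=
    (contDiff_apply ℝ ℝ j).contDiffOn.mul
      ((hk_smooth.fderiv_of_isOpen isOpen_ne (m := 1) (WithTop.coe_le_coe.2 le_top)).clm_apply
        contDiffOn_const)
  have hK_hom : ∀ c : ℝ, 0 < c → ∀ x : Euc d, x ≠ 0 → K (c • x) = c ^ (-(d : ℝ)) * K x := by
    intro c hc x hx
    simp only [hK]
    rw [fderiv_smul_of_homogeneous hk_hom c hc x hx, rpow_sub_one hc.ne']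
    simp only [Pi.smul_apply, smul_eq_mul, smul_apply]
    field_simp
  have hK_mean := integral_sphere_coord_mul_fderiv_eq_zero hk_smooth hk_hom
    (integral_sphere_eq_zero_of_annulus hk_smooth.continuousOn hk_hom
      (hk_mean 1 2 one_pos one_le_two)) i j hK_smooth.continuousOn hK_hom
  obtain ⟨C, hC, hbound⟩ := exists_holder_bound_cutoff_mul_homogeneous volume hα0 hα1
    (K := K) ((measurable_pi_apply j).mul (measurable_fderiv_apply_const ℝ k _)) (by simp [hK])
    hK_smooth (by rwa [hfin]) hK_mean (hχ_smooth.of_le (by exact_mod_cast le_top)) hχ_range hχ_supp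
  refine ⟨C, hC, fun σ Mσ hσ => ?_⟩
  obtain ⟨h1, h2, h3⟩ := hbound σ Mσ (hσ.continuous hα0).measurable
    ((norm_nonneg _).trans (hσ.1 0)) hσ.2
  exact ⟨h1, h2, h3⟩

end
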